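/- For odd prime power q, the number of invertible symmetric k-by-k matrices over F_q equals q^{k(k+1)/2} * product over odd i with 1 <= i <= k of (1 - q^{-i}). -/

import Mathlib

/-!
Split a symmetric matrix of size `k + 1` into its corner entry `a`, its border `v` and the
remaining symmetric block `D`, and count the admissible `D` for each `(a, v)`.

* If `a ≠ 0`, the Schur complement `D - a⁻¹ v vᵀ` can be any invertible symmetric matrix.
* If `a = 0` and `v = 0`, there is no admissible `D`.
* If `a = 0` and `v ≠ 0`, then since `GL_k` acts transitively on nonzero vectors, `v` may be taken
  to be a basis vector; the first row and column of `D` are then free, and the rest of `D` has to be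
  invertible.

Writing `N k` for the number of invertible symmetric `k × k` matrices, this gives
`N (k + 2) = (q - 1) q ^ (k + 1) N (k + 1) + (q ^ (k + 1) - 1) q ^ (k + 1) N k`, whose solution
satisfies `N (k + 1) = (q ^ (k + 1) - 1) N k` for even `k` and `N (k + 1) = q ^ (k + 1) N k` for
odd `k`.
-/

open Matrix

lemma sum_eq_add_card_sub_one_mul {α R : Type*} [Fintype α] [Ring R] {f : α → R} {c : R}
    (a : α) (h : ∀ b, b ≠ a → f b = c) : ∑ b, f b = f a + (Fintype.card α - 1) * c := by
  classical
  rw [Fintype.sum_eq_add_sum_compl a, Finset.sum_congr rfl fun b hb => h b (by simpa using hb),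
    Finset.sum_const, Finset.card_compl, Finset.card_singleton, nsmul_eq_mul,
    Nat.cast_sub (Fintype.card_pos_iff.2 ⟨a⟩), Nat.cast_one]

lemma exists_linearEquiv_apply_eq (K : Type*) {V : Type*} [DivisionRing K] [AddCommGroup V]
    [Module K V] {v w : V} (hv : v ≠ 0) (hw : w ≠ 0) : ∃ g : V ≃ₗ[K] V, g v = w := by
  let ev := LinearEquiv.toSpanNonzeroSingleton K V v hv
  let ew := LinearEquiv.toSpanNonzeroSingleton K V w hw
  obtain ⟨g, hg⟩ := Submodule.exists_linearEquiv_restrict_eq (ev.symm ≪≫ₗ ew)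
  have hgv := hg (ev 1)
  rw [LinearEquiv.trans_apply, ev.symm_apply_apply] at hgv
  exact ⟨g, by simpa [ev, ew] using hgv.symm⟩

lemma exists_generalLinearGroup_mulVec_eq {K n : Type*} [Field K] [Fintype n] [DecidableEq n]
    {v w : n → K} (hv : v ≠ 0) (hw : w ≠ 0) : ∃ P : GL n K, (P : Matrix n n K) *ᵥ v = w := by
  obtain ⟨g, hg⟩ := exists_linearEquiv_apply_eq K hv hw
  refine ⟨GeneralLinearGroup.toLin.symm (.ofLinearEquiv g), ?_⟩
  rw [← hg]
  exact LinearMap.toMatrix'_mulVec g.toLinearMap v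

lemma isSymm_mul_mul_transpose_iff {R n : Type*} [CommRing R] [Fintype n] [DecidableEq n]
    (P : GL n R) (D : Matrix n n R) :
    ((P : Matrix n n R) * D * (P : Matrix n n R)ᵀ).IsSymm ↔ D.IsSymm := by
  have hPt : IsUnit (P : Matrix n n R)ᵀ := (isUnit_transpose _).2 P.isUnit
  rw [IsSymm, transpose_mul, transpose_mul, transpose_transpose, ← Matrix.mul_assoc,
    hPt.mul_left_inj, P.isUnit.mul_right_inj, IsSymm]

section BorderedMatrix

variable {R n : Type*}

/-- The symmetric bordering of `D`: the block matrix with corner entry `a`, first row and first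
column continued by `v`, and remaining block `D`. -/
def borderedMatrix (a : R) (v : n → R) (D : Matrix n n R) : Matrix (Unit ⊕ n) (Unit ⊕ n) R :=
  fromBlocks (of fun _ _ => a) (replicateRow Unit v) (replicateCol Unit v) D

lemma isSymm_borderedMatrix_iff {a : R} {v : n → R} {D : Matrix n n R} :
    (borderedMatrix a v D).IsSymm ↔ D.IsSymm := by
  simp [borderedMatrix, IsSymm.ext_iff]

lemma borderedMatrix_toBlocks₂₂_of_isSymm {M : Matrix (Unit ⊕ n) (Unit ⊕ n) R}
    (hM : M.IsSymm) :
    borderedMatrix (M (.inl ()) (.inl ())) (fun i => M (.inl ()) (.inr i)) M.toBlocks₂₂ = M := by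
  ext (i | i) (j | j)
  exacts [rfl, rfl, hM.apply _ _, rfl]

/-- Splitting off the first row and column of the symmetric matrices that satisfy `p`. -/
def symmBorderEquiv (p : Matrix (Unit ⊕ n) (Unit ⊕ n) R → Prop) :
    {M : Matrix (Unit ⊕ n) (Unit ⊕ n) R // p M ∧ M.IsSymm} ≃
      Σ x : R × (n → R), {D : Matrix n n R // p (borderedMatrix x.1 x.2 D) ∧ D.IsSymm} where
  toFun M := ⟨(M.1 (.inl ()) (.inl ()), fun i => M.1 (.inl ()) (.inr i)), M.1.toBlocks₂₂, by
    rw [← isSymm_borderedMatrix_iff, borderedMatrix_toBlocks₂₂_of_isSymm M.2.2]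
    exact M.2⟩
  invFun x := ⟨borderedMatrix x.1.1 x.1.2 x.2.1, x.2.2.1, isSymm_borderedMatrix_iff.2 x.2.2.2⟩
  left_inv M := Subtype.ext (borderedMatrix_toBlocks₂₂_of_isSymm M.2.2)
  right_inv _ := rfl

lemma card_symm_eq_sum_borderedMatrix [Fintype R] [Fintype n] [DecidableEq n]
    (p : Matrix (Unit ⊕ n) (Unit ⊕ n) R → Prop) :
    Nat.card {M : Matrix (Unit ⊕ n) (Unit ⊕ n) R // p M ∧ M.IsSymm} =
      ∑ a : R, ∑ v : n → R,
        Nat.card {D : Matrix n n R // p (borderedMatrix a v D) ∧ D.IsSymm} := by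
  rw [Nat.card_congr (symmBorderEquiv p), Nat.card_sigma, Fintype.sum_prod_type]

lemma borderedMatrix_congruence [CommSemiring R] [Fintype n] (P : Matrix n n R) (a : R)
    (v : n → R) (D : Matrix n n R) :
    borderedMatrix a (P *ᵥ v) (P * D * Pᵀ) =
      fromBlocks (1 : Matrix Unit Unit R) 0 0 P * borderedMatrix a v D *
        (fromBlocks (1 : Matrix Unit Unit R) 0 0 P)ᵀ := by
  simp [borderedMatrix, fromBlocks_multiply, fromBlocks_transpose, replicateRow_mulVec,
    replicateCol_mulVec]

variable [CommRing R] [Fintype n] [DecidableEq n]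

lemma isUnit_borderedMatrix_units_iff (a : Rˣ) (v : n → R) (D : Matrix n n R) :
    IsUnit (borderedMatrix (a : R) v D) ↔ IsUnit (D - (↑a⁻¹ : R) • vecMulVec v v) := by
  let : Invertible (of fun _ _ => a : Matrix Unit Unit R) :=
    ⟨of fun _ _ => ↑a⁻¹, by ext; simp [mul_apply], by ext; simp [mul_apply]⟩
  have schur : replicateCol Unit v * ⅟(of fun _ _ => a : Matrix Unit Unit R) * replicateRow Unit v =
      (↑a⁻¹ : R) • vecMulVec v v := by
    change replicateCol Unit v * (of fun _ _ => ↑a⁻¹ : Matrix Unit Unit R) * _ = _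
    ext i j
    simp [mul_apply, vecMulVec_apply, mul_comm, mul_left_comm, mul_assoc]
  rw [borderedMatrix, isUnit_fromBlocks_iff_of_invertible₁₁, schur]

lemma not_isUnit_borderedMatrix_zero_zero [Nontrivial R] (D : Matrix n n R) :
    ¬IsUnit (borderedMatrix 0 0 D) := by
  rw [borderedMatrix, replicateRow_zero, isUnit_fromBlocks_zero₁₂]
  exact fun h => not_isUnit_zero h.1

lemma isUnit_borderedMatrix_congruence_iff (P : GL n R) (a : R) (v : n → R) (D : Matrix n n R) :
    IsUnit (borderedMatrix a ((P : Matrix n n R) *ᵥ v) (P * D * (P : Matrix n n R)ᵀ)) ↔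
      IsUnit (borderedMatrix a v D) := by
  have hQ : IsUnit (fromBlocks (1 : Matrix Unit Unit R) 0 0 (P : Matrix n n R)) :=
    isUnit_fromBlocks_zero₂₁.2 ⟨isUnit_one, P.isUnit⟩
  rw [borderedMatrix_congruence, ((isUnit_transpose _).2 hQ).mul_right_iff, hQ.mul_left_iff]

lemma isUnit_borderedMatrix_borderedMatrix_iff (b : R) (c : n → R) (D : Matrix n n R) :
    IsUnit (borderedMatrix 0 (Sum.elim 1 0) (borderedMatrix b c D)) ↔ IsUnit D := by
  -- Exchanging the first two rows makes the matrix block triangular.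
  let σ : Equiv.Perm (Unit ⊕ (Unit ⊕ n)) := Equiv.swap (.inl ()) (.inr (.inl ()))
  have triangular : (borderedMatrix 0 (Sum.elim 1 0) (borderedMatrix b c D)).submatrix σ id =
      fromBlocks 1 (replicateRow Unit (Sum.elim (fun _ => b) c)) 0
        (fromBlocks 1 0 (replicateCol Unit c) D) := by
    ext (i | i | i) (j | j | j) <;> simp [borderedMatrix, σ, Equiv.swap_apply_def]
  rw [← isUnit_submatrix_equiv σ (.refl _), Equiv.coe_refl, triangular,
    isUnit_fromBlocks_zero₂₁, isUnit_fromBlocks_zero₁₂]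
  simp

end BorderedMatrix

/-- The number of invertible symmetric matrices over `R` with rows and columns indexed by `n`. -/
noncomputable def numInvertibleSymm (R n : Type*) [CommRing R] [Fintype n] [DecidableEq n] : ℕ :=
  Nat.card {M : Matrix n n R // IsUnit M ∧ M.IsSymm}

/-- The number of symmetric matrices whose bordering by the corner entry `a` and the vector `v` is
invertible. -/
noncomputable def numBorderCompletions {R n : Type*} [CommRing R] [Fintype n] [DecidableEq n]
    (a : R) (v : n → R) : ℕ :=
  Nat.card {D : Matrix n n R // IsUnit (borderedMatrix a v D) ∧ D.IsSymm}

section CommRing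

variable {R n : Type*} [CommRing R] [Fintype n] [DecidableEq n]

lemma numInvertibleSymm_congr {m : Type*} [Fintype m] [DecidableEq m] (e : m ≃ n) :
    numInvertibleSymm R m = numInvertibleSymm R n :=
  Nat.card_congr <| (reindex e e).subtypeEquiv fun M => by
    rw [isSymm_reindex_iff, reindex_apply, isUnit_submatrix_equiv]

lemma numInvertibleSymm_of_isEmpty [IsEmpty n] : numInvertibleSymm R n = 1 := by
  have : Nonempty {M : Matrix n n R // IsUnit M ∧ M.IsSymm} := ⟨1, isUnit_one, isSymm_one⟩
  exact Nat.card_unique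

lemma numBorderCompletions_units (a : Rˣ) (v : n → R) :
    numBorderCompletions (a : R) v = numInvertibleSymm R n := by
  have hs : ((↑a⁻¹ : R) • vecMulVec v v).IsSymm := IsSymm.smul (transpose_vecMulVec v v) _
  refine Nat.card_congr <| (Equiv.subRight ((↑a⁻¹ : R) • vecMulVec v v)).subtypeEquiv fun D => ?_
  rw [Equiv.subRight_apply, isUnit_borderedMatrix_units_iff]
  refine and_congr_right fun _ => ⟨fun h => h.sub hs, fun h => ?_⟩
  simpa using h.add hs

lemma numBorderCompletions_zero_zero [Nontrivial R] :
    numBorderCompletions (0 : R) (0 : n → R) = 0 := by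
  simp [numBorderCompletions, not_isUnit_borderedMatrix_zero_zero]

lemma numBorderCompletions_mulVec (P : GL n R) (a : R) (v : n → R) :
    numBorderCompletions a ((P : Matrix n n R) *ᵥ v) = numBorderCompletions a v := by
  obtain ⟨Pt, hPt⟩ : IsUnit (P : Matrix n n R)ᵀ := (isUnit_transpose _).2 P.isUnit
  refine (Nat.card_congr <| (P.mulLeft.trans Pt.mulRight).subtypeEquiv fun D => ?_).symm
  rw [Equiv.trans_apply, Units.mulLeft_apply, Units.mulRight_apply, hPt,
    isUnit_borderedMatrix_congruence_iff, isSymm_mul_mul_transpose_iff]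

lemma numBorderCompletions_sumElim_one_zero [Fintype R] :
    numBorderCompletions (0 : R) (Sum.elim 1 0 : Unit ⊕ n → R) =
      Fintype.card R ^ (Fintype.card n + 1) * numInvertibleSymm R n := by
  rw [numBorderCompletions, card_symm_eq_sum_borderedMatrix]
  simp only [isUnit_borderedMatrix_borderedMatrix_iff]
  simp [numInvertibleSymm, pow_succ', mul_assoc]

end CommRing

section Field

variable {F n : Type*} [Field F] [Fintype F] [Fintype n] [DecidableEq n]

lemma numBorderCompletions_zero_of_ne_zero {v : Unit ⊕ n → F} (hv : v ≠ 0) :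
    numBorderCompletions 0 v =
      Fintype.card F ^ (Fintype.card n + 1) * numInvertibleSymm F n := by
  have single_ne_zero : (Sum.elim 1 0 : Unit ⊕ n → F) ≠ 0 := fun h => by
    simpa using congrFun h (.inl ())
  obtain ⟨P, rfl⟩ := exists_generalLinearGroup_mulVec_eq single_ne_zero hv
  rw [numBorderCompletions_mulVec, numBorderCompletions_sumElim_one_zero]

variable (F n)

lemma numInvertibleSymm_unit_sum : (numInvertibleSymm F (Unit ⊕ n) : ℚ) =
    ∑ v : n → F, (numBorderCompletions 0 v : ℚ) +
      (Fintype.card F - 1) * (Fintype.card F ^ Fintype.card n * numInvertibleSymm F n) := by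
  have corner_ne_zero (a : F) (ha : a ≠ 0) : ∑ v : n → F, (numBorderCompletions a v : ℚ) =
      Fintype.card F ^ Fintype.card n * numInvertibleSymm F n := by
    lift a to Fˣ using ha.isUnit
    simp [numBorderCompletions_units]
  rw [← sum_eq_add_card_sub_one_mul 0 corner_ne_zero, numInvertibleSymm,
    card_symm_eq_sum_borderedMatrix]
  push_cast
  rfl

lemma numInvertibleSymm_unit : (numInvertibleSymm F Unit : ℚ) = Fintype.card F - 1 := by
  rw [numInvertibleSymm_congr (Equiv.sumEmpty Unit Empty).symm, numInvertibleSymm_unit_sum,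
    numInvertibleSymm_of_isEmpty, Fintype.sum_unique, Subsingleton.elim default 0,
    numBorderCompletions_zero_zero]
  simp

lemma numInvertibleSymm_unit_sum_unit_sum :
    (numInvertibleSymm F (Unit ⊕ (Unit ⊕ n)) : ℚ) =
      (Fintype.card F - 1) * (Fintype.card F ^ (Fintype.card n + 1) *
          numInvertibleSymm F (Unit ⊕ n)) +
        (Fintype.card F ^ (Fintype.card n + 1) - 1) *
          (Fintype.card F ^ (Fintype.card n + 1) * numInvertibleSymm F n) := by
  have border_ne_zero (v : Unit ⊕ n → F) (hv : v ≠ 0) : (numBorderCompletions 0 v : ℚ) =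
      Fintype.card F ^ (Fintype.card n + 1) * numInvertibleSymm F n := by
    exact_mod_cast numBorderCompletions_zero_of_ne_zero hv
  rw [numInvertibleSymm_unit_sum, sum_eq_add_card_sub_one_mul 0 border_ne_zero,
    numBorderCompletions_zero_zero]
  simp only [Fintype.card_sum, Fintype.card_unit, Fintype.card_fun]
  push_cast
  ring

lemma numInvertibleSymm_fin_add_two (k : ℕ) : (numInvertibleSymm F (Fin (k + 2)) : ℚ) =
    (Fintype.card F - 1) * (Fintype.card F ^ (k + 1) * numInvertibleSymm F (Fin (k + 1))) +
      (Fintype.card F ^ (k + 1) - 1) *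
        (Fintype.card F ^ (k + 1) * numInvertibleSymm F (Fin k)) := by
  have e₁ : Fin (k + 1) ≃ Unit ⊕ Fin k := Fintype.equivOfCardEq (by simp [add_comm])
  have e₂ : Fin (k + 2) ≃ Unit ⊕ (Unit ⊕ Fin k) := Fintype.equivOfCardEq (by simp; omega)
  rw [numInvertibleSymm_congr e₁, numInvertibleSymm_congr e₂, numInvertibleSymm_unit_sum_unit_sum,
    Fintype.card_fin]

lemma numInvertibleSymm_fin_succ (k : ℕ) : (numInvertibleSymm F (Fin (k + 1)) : ℚ) =
    (Fintype.card F ^ (k + 1) - if Odd (k + 1) then 1 else 0) * numInvertibleSymm F (Fin k) := by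
  induction k with
  | zero =>
    rw [numInvertibleSymm_of_isEmpty (n := Fin 0), numInvertibleSymm_congr finOneEquiv,
      numInvertibleSymm_unit]
    simp
  | succ k ih =>
    rw [numInvertibleSymm_fin_add_two]
    by_cases hk : Odd (k + 1)
    · have hk' : ¬Odd (k + 2) := by grind
      rw [if_pos hk] at ih
      rw [if_neg hk']
      linear_combination -(Fintype.card F : ℚ) ^ (k + 1) * ih
    · have hk' : Odd (k + 2) := by grind
      rw [if_neg hk] at ih
      rw [if_pos hk']
      linear_combination -((Fintype.card F : ℚ) ^ (k + 1) - 1) * ih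

end Field

theorem card_invertible_symmetric_matrices_general (q k : ℕ) (F : Type*) [Field F] [Fintype F]
    (hF : Fintype.card F = q) :
    (Nat.card {M : Matrix (Fin k) (Fin k) F // IsUnit M ∧ M.transpose = M} : ℚ) =
      (q : ℚ) ^ (k * (k + 1) / 2) *
        ∏ i ∈ (Finset.Icc 1 k).filter (fun i => Odd i), (1 - 1 / (q : ℚ) ^ i) := by
  subst hF
  have card_ne_zero : (Fintype.card F : ℚ) ≠ 0 := Nat.cast_ne_zero.2 Fintype.card_ne_zero
  change (numInvertibleSymm F (Fin k) : ℚ) = _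
  induction k with
  | zero => simp [numInvertibleSymm_of_isEmpty]
  | succ k ih =>
    have triangle_succ : (k + 1) * (k + 1 + 1) / 2 = k * (k + 1) / 2 + (k + 1) := by
      rw [← Nat.add_mul_div_right _ _ two_pos]
      ring_nf
    rw [numInvertibleSymm_fin_succ, ih, triangle_succ, Finset.prod_filter, Finset.prod_filter,
      Finset.prod_Icc_succ_top (Nat.le_add_left 1 k), pow_add]
    split_ifs
    · field_simp
      ring
    · ring

/-- MacWilliams' count: for an odd prime power `q` (realized as the cardinality of a finite
field `F`), the number of invertible symmetric `k × k` matrices over `F` equals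
`q^(k(k+1)/2) * ∏_{1 ≤ i ≤ k, i odd} (1 - q⁻ⁱ)`. -/
theorem card_invertible_symmetric_matrices (q k : ℕ) (F : Type*) [Field F] [Fintype F]
    (hF : Fintype.card F = q) (hq : Odd q) :
    (Nat.card {M : Matrix (Fin k) (Fin k) F // IsUnit M ∧ M.transpose = M} : ℚ) =
      (q : ℚ) ^ (k * (k + 1) / 2) *
        ∏ i ∈ (Finset.Icc 1 k).filter (fun i => Odd i), (1 - 1 / (q : ℚ) ^ i) :=
  card_invertible_symmetric_matrices_general q k F hF
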